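/- Let A be a commutative ring and B an A-algebra which is finite and free as an A-module. Let C := B ⊗_A B, m : C → B the multiplication map, J := ker m, and 𝒟 := m(Ann_C(J)). Then 𝒟 annihilates all higher Ext groups of B over C: for every C-module N, every integer i ≥ 1, and every x ∈ Ann_C(J), the endomorphism of Ext^i_C(B, N) induced (by functoriality in the first argument) by the C-linear endomorphism of B given by multiplication by m(x) is zero. -/

import Mathlib

open scoped TensorProduct

open CategoryTheory

universe u

/-- Let `A` be a commutative ring and `B` an `A`-algebra which is finite and
free as an `A`-module.  Let `C := B ⊗[A] B`, `m : C → B` the multiplication map, `J := ker m`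
and `𝒟 := m(Ann_C J)`.  Then `𝒟` annihilates all higher Ext groups of `B` over `C`: for every
`C`-module `N`, every `i ≥ 1` and every `x ∈ Ann_C J`, the endomorphism of `Ext^i_C(B, N)`
induced (by functoriality in the first argument) by the `C`-linear endomorphism of `B` given
by multiplication by `m x` is zero (`B` being a `C`-module via `m`). -/
theorem D_annihilates_higher_ext
    {A B : Type u} [CommRing A] [CommRing B] [Algebra A B]
    [Module.Finite A B] [Module.Free A B]
    (N : Type u) [AddCommGroup N] [Module (B ⊗[A] B) N]
    (i : ℕ) (hi : 1 ≤ i)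
    (x : B ⊗[A] B)
    (hx : ∀ j ∈ RingHom.ker (Algebra.TensorProduct.lmul' A : B ⊗[A] B →ₐ[A] B), x * j = 0) :
    letI : Algebra (B ⊗[A] B) B :=
      (Algebra.TensorProduct.lmul' A : B ⊗[A] B →ₐ[A] B).toRingHom.toAlgebra
    letI : HasDerivedCategory (ModuleCat (B ⊗[A] B)) := HasDerivedCategory.standard _
    haveI : HasExt (ModuleCat (B ⊗[A] B)) := hasExt_of_hasDerivedCategory _
    ∀ e : Abelian.Ext (ModuleCat.of (B ⊗[A] B) B) (ModuleCat.of (B ⊗[A] B) N) i,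
      (Abelian.Ext.mk₀ (ModuleCat.ofHom
          (Algebra.lmul (B ⊗[A] B) B (Algebra.TensorProduct.lmul' A (S := B) x)))).comp e
        (zero_add i) = 0 := by
  letI : Algebra (B ⊗[A] B) B :=
    (Algebra.TensorProduct.lmul' A : B ⊗[A] B →ₐ[A] B).toRingHom.toAlgebra
  letI : HasDerivedCategory (ModuleCat (B ⊗[A] B)) := HasDerivedCategory.standard _
  haveI : HasExt (ModuleCat (B ⊗[A] B)) := hasExt_of_hasDerivedCategory _
  intro e
  have hsm : ∀ (c : B ⊗[A] B) (b : B), c • b = Algebra.TensorProduct.lmul' A (S := B) c * b :=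
    fun c b => rfl
  let s : B →ₗ[B ⊗[A] B] (B ⊗[A] B) :=
    { toFun := fun b => x * (b ⊗ₜ[A] (1 : B))
      map_add' := fun a b => by rw [TensorProduct.add_tmul, mul_add]
      map_smul' := fun c b => by
        have h := hx (c * (b ⊗ₜ[A] (1 : B)) - (c • b) ⊗ₜ[A] (1 : B)) (by
          rw [RingHom.mem_ker, map_sub, map_mul, hsm]
          simp)
        rw [mul_sub, sub_eq_zero] at h
        rw [← h, RingHom.id_apply, smul_eq_mul]
        ring }
  let p : (B ⊗[A] B) →ₗ[B ⊗[A] B] B := Algebra.linearMap (B ⊗[A] B) B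
  have hf : ModuleCat.ofHom
      (Algebra.lmul (B ⊗[A] B) B (Algebra.TensorProduct.lmul' A (S := B) x)) =
      ModuleCat.ofHom s ≫ ModuleCat.ofHom p := by
    rw [← ModuleCat.ofHom_comp]
    congr 1
    ext b
    change Algebra.TensorProduct.lmul' A (S := B) x * b =
      Algebra.TensorProduct.lmul' A (S := B) (x * (b ⊗ₜ[A] (1 : B)))
    rw [map_mul]
    simp
  obtain ⟨n, rfl⟩ : ∃ n, i = n + 1 := ⟨i - 1, by omega⟩
  haveI : Projective (ModuleCat.of (B ⊗[A] B) (B ⊗[A] B)) :=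
    ModuleCat.projective_of_free (Module.Free.chooseBasis (B ⊗[A] B) (B ⊗[A] B))
  rw [hf, ← Abelian.Ext.mk₀_comp_mk₀_assoc,
    Abelian.Ext.eq_zero_of_projective ((Abelian.Ext.mk₀ (ModuleCat.ofHom p)).comp e (zero_add _)),
    Abelian.Ext.comp_zero]
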